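/- Let Q ∈ ℝ^{m×r} and ω ≥ 0 satisfy ‖I − QᵀQ‖ ≤ ω, let X, ΔV, ΔH ∈ ℝ^{m×s}, and let S, T ∈ ℝ^{s×s} be nonsingular. Define U = ((I − QQᵀ)X + ΔV)·S⁻¹ and P = ((I − QQᵀ)U + ΔH)·T⁻¹. Then ‖QᵀP‖ ≤ ω·(1+ω)·(ω‖X‖ + ‖ΔV‖)·‖S⁻¹‖·‖T⁻¹‖ + (1+ω)·‖ΔH‖·‖T⁻¹‖. -/

import Mathlib

open scoped Matrix

/-- The spectral norm (`ℓ²→ℓ²` operator norm) of a real matrix. -/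
noncomputable def specNorm {m n : Type*} [Fintype m] [Fintype n] [DecidableEq n]
    (A : Matrix m n ℝ) : ℝ :=
  ‖LinearMap.toContinuousLinearMap (Matrix.toEuclideanLin A)‖

/-- The smallest singular value of a real matrix: the infimum of `‖A x‖₂` over
unit vectors `x`. -/
noncomputable def sigmaMin {m n : Type*} [Fintype m] [Fintype n] [DecidableEq n]
    (A : Matrix m n ℝ) : ℝ :=
  sInf ((fun x : EuclideanSpace ℝ n => ‖Matrix.toEuclideanLin A x‖) ''
    {x : EuclideanSpace ℝ n | ‖x‖ = 1})

/-- The 2-norm condition number `κ(A) = ‖A‖ / σ_min(A)`. -/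
noncomputable def condNum {m n : Type*} [Fintype m] [Fintype n] [DecidableEq n]
    (A : Matrix m n ℝ) : ℝ :=
  specNorm A / sigmaMin A

/-!
Since `Qᴴ(1 - QQᴴ) = (1 - QᴴQ)Qᴴ`, a Gram–Schmidt step multiplies the component of the block along
`Q` by `1 - QᴴQ`, of norm at most `ω`, and adds the component `QᴴE` of its error; both are then
scaled by the normalizing factor. Applying this one-step estimate to the reorthogonalization and
then to the first stage leaves `‖QᴴX‖`, `‖QᴴΔV‖` and `‖QᴴΔH‖`, each of which costs a factor
`‖Qᴴ‖ ≤ 1 + ω`.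
-/

section BlockGramSchmidt

variable {𝕜 m n p q r : Type*} [RCLike 𝕜] [Fintype m] [Fintype n] [Fintype r]
  [DecidableEq r] {Q : Matrix m r 𝕜} {ω : ℝ}

open scoped Matrix.Norms.L2Operator

theorem specNorm_eq_l2_opNorm [DecidableEq n] (A : Matrix m n ℝ) : specNorm A = ‖A‖ := rfl

theorem l2_opNorm_sq_le_one_add (hQ : ‖1 - Qᴴ * Q‖ ≤ ω) : ‖Q‖ ^ 2 ≤ 1 + ω :=
  calc ‖Q‖ ^ 2 = ‖1 - (1 - Qᴴ * Q)‖ := by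
        rw [sub_sub_cancel, Matrix.l2_opNorm_conjTranspose_mul_self, sq]
    _ ≤ ‖(1 : Matrix r r 𝕜)‖ + ‖1 - Qᴴ * Q‖ := norm_sub_le _ _
    _ ≤ 1 + ω := add_le_add (IsStarProjection.one _).norm_le hQ

theorem l2_opNorm_conjTranspose_mul_le [DecidableEq n] (hQ : ‖1 - Qᴴ * Q‖ ≤ ω)
    (Y : Matrix m n 𝕜) : ‖Qᴴ * Y‖ ≤ (1 + ω) * ‖Y‖ := by
  classical
  have hω : 0 ≤ ω := (norm_nonneg _).trans hQ
  have hQ_norm : ‖Q‖ ≤ 1 + ω :=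
    le_of_sq_le_sq ((l2_opNorm_sq_le_one_add hQ).trans
      (le_self_pow₀ (le_add_of_nonneg_right hω) two_ne_zero)) (by positivity)
  rw [← Matrix.l2_opNorm_conjTranspose] at hQ_norm
  exact (Matrix.l2_opNorm_mul _ _).trans (by gcongr)

variable [DecidableEq m]

/-- One step of block classical Gram–Schmidt in inexact arithmetic: the block `X` is projected
against `Q` with accumulated error `E`, then normalized. The matrix `A` stands for the inverse of
the computed triangular factor; it need not be square. -/
def bcgsStep (Q : Matrix m r 𝕜) (X E : Matrix m n 𝕜) (A : Matrix n p 𝕜) : Matrix m p 𝕜 :=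
  ((1 - Q * Qᴴ) * X + E) * A

theorem mul_one_sub_mul_eq_one_sub_mul_mul {R : Type*} [Ring R]
    (A : Matrix r m R) (B : Matrix m r R) : A * (1 - B * A) = (1 - A * B) * A := by
  rw [Matrix.mul_sub, Matrix.sub_mul, Matrix.mul_one, Matrix.one_mul, Matrix.mul_assoc]

theorem conjTranspose_mul_bcgsStep (Q : Matrix m r 𝕜) (X E : Matrix m n 𝕜) (A : Matrix n p 𝕜) :
    Qᴴ * bcgsStep Q X E A = ((1 - Qᴴ * Q) * (Qᴴ * X) + Qᴴ * E) * A := by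
  rw [bcgsStep, ← Matrix.mul_assoc, Matrix.mul_add, ← Matrix.mul_assoc,
    mul_one_sub_mul_eq_one_sub_mul_mul, Matrix.mul_assoc (1 - Qᴴ * Q)]

variable [Fintype p] [Fintype q] [DecidableEq n] [DecidableEq p] [DecidableEq q]

theorem l2_opNorm_conjTranspose_mul_bcgsStep_le (hQ : ‖1 - Qᴴ * Q‖ ≤ ω)
    (X E : Matrix m n 𝕜) (A : Matrix n p 𝕜) :
    ‖Qᴴ * bcgsStep Q X E A‖ ≤ (ω * ‖Qᴴ * X‖ + ‖Qᴴ * E‖) * ‖A‖ := by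
  rw [conjTranspose_mul_bcgsStep]
  calc ‖((1 - Qᴴ * Q) * (Qᴴ * X) + Qᴴ * E) * A‖
      ≤ ‖(1 - Qᴴ * Q) * (Qᴴ * X) + Qᴴ * E‖ * ‖A‖ := Matrix.l2_opNorm_mul _ _
    _ ≤ (‖1 - Qᴴ * Q‖ * ‖Qᴴ * X‖ + ‖Qᴴ * E‖) * ‖A‖ := by
        gcongr
        exact norm_add_le_of_le (Matrix.l2_opNorm_mul _ _) le_rfl
    _ ≤ (ω * ‖Qᴴ * X‖ + ‖Qᴴ * E‖) * ‖A‖ := by gcongr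

theorem stmt_14_general (hQ : ‖1 - Qᴴ * Q‖ ≤ ω) (X ΔV : Matrix m n 𝕜) (ΔH : Matrix m p 𝕜)
    (A : Matrix n p 𝕜) (B : Matrix p q 𝕜) :
    ‖Qᴴ * bcgsStep Q (bcgsStep Q X ΔV A) ΔH B‖ ≤
      ω * (1 + ω) * (ω * ‖X‖ + ‖ΔV‖) * ‖A‖ * ‖B‖ + (1 + ω) * ‖ΔH‖ * ‖B‖ := by
  have hω : 0 ≤ ω := (norm_nonneg _).trans hQ
  calc ‖Qᴴ * bcgsStep Q (bcgsStep Q X ΔV A) ΔH B‖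
      ≤ (ω * ‖Qᴴ * bcgsStep Q X ΔV A‖ + ‖Qᴴ * ΔH‖) * ‖B‖ :=
        l2_opNorm_conjTranspose_mul_bcgsStep_le hQ _ _ _
    _ ≤ (ω * ((ω * ‖Qᴴ * X‖ + ‖Qᴴ * ΔV‖) * ‖A‖) + ‖Qᴴ * ΔH‖) * ‖B‖ := by
        gcongr
        exact l2_opNorm_conjTranspose_mul_bcgsStep_le hQ _ _ _
    _ ≤ (ω * ((ω * ((1 + ω) * ‖X‖) + (1 + ω) * ‖ΔV‖) * ‖A‖) + (1 + ω) * ‖ΔH‖) * ‖B‖ := by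
        gcongr <;> exact l2_opNorm_conjTranspose_mul_le hQ _
    _ = ω * (1 + ω) * (ω * ‖X‖ + ‖ΔV‖) * ‖A‖ * ‖B‖ + (1 + ω) * ‖ΔH‖ * ‖B‖ := by ring

end BlockGramSchmidt

theorem stmt_14 (m r s : ℕ)
    (Q : Matrix (Fin m) (Fin r) ℝ) (ω : ℝ) (hω : 0 ≤ ω)
    (hQ : specNorm (1 - Qᵀ * Q) ≤ ω)
    (X ΔV ΔH : Matrix (Fin m) (Fin s) ℝ)
    (S T : Matrix (Fin s) (Fin s) ℝ) (hS : IsUnit S.det) (hT : IsUnit T.det) :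
    specNorm (Qᵀ *
        (((1 - Q * Qᵀ) * (((1 - Q * Qᵀ) * X + ΔV) * S⁻¹) + ΔH) * T⁻¹)) ≤
      ω * (1 + ω) * (ω * specNorm X + specNorm ΔV) * specNorm S⁻¹ *
          specNorm T⁻¹ +
        (1 + ω) * specNorm ΔH * specNorm T⁻¹ := by
  rw [← Matrix.conjTranspose_eq_transpose_of_trivial] at hQ ⊢
  simp only [specNorm_eq_l2_opNorm] at hQ ⊢
  exact stmt_14_general hQ X ΔV ΔH S⁻¹ T⁻¹
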